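/- Let r ≥ 1. Suppose x ∈ ℝ⁺ and P is a finite collection of bitiles with x ∈ I_P for each P ∈ P, and P = ⋃_{T∈T} T where T is either a collection of u-overlapping trees which are td-maximal among u-overlapping trees contained in P, or a properly-sorted collection of l-overlapping trees. Then for any collection of real coefficients {c_P}_{P∈P}, sup_{k∈ℤ} ‖ Σ_{P∈P, |I_P|<2^k} c_P 1_{ω_{P_u}}(ξ) ‖_{V^r_ξ} ≤ C |T|^{1/r} · sup_{T∈T} ‖ Σ_{P∈T} c_P 1_{ω_{P_u}} ‖_{V^r}. -/

import Mathlib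

open MeasureTheory Set Filter
open scoped ENNReal NNReal Classical BigOperators RealInnerProductSpace

noncomputable section

/-- The binary digit of `x` in position `n+1` to the left of the point
(terminating expansion for dyadic rationals). -/
def digit (n : ℤ) (x : ℝ) : ℤ := ⌊x / 2 ^ n⌋ % 2

/-- Bitwise addition `⊕` on nonnegative reals. -/
def wXor (x y : ℝ) : ℝ := ∑' n : ℤ, (((digit n x + digit n y) % 2 : ℤ) : ℝ) * 2 ^ n

/-- The `n`-th digit of the bitwise product `x ⊗ y`. -/
def wMulDigit (n : ℤ) (x y : ℝ) : ℤ :=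
  ⌊∑' m : ℤ, ((digit (n - m) x * digit m y : ℤ) : ℝ)⌋ % 2

/-- Bitwise multiplication `⊗` on nonnegative reals. -/
def wMul (x y : ℝ) : ℝ := ∑' n : ℤ, ((wMulDigit n x y : ℤ) : ℝ) * 2 ^ n

/-- The Walsh character `e(x) = exp (i π d₋₁(x))`. -/
def walshe (x : ℝ) : ℝ := (-1 : ℝ) ^ (digit (-1) x)

/-- The Walsh–Fourier transform on `ℝ⁺`; it is involutive, so it also serves
as the inverse Walsh–Fourier transform `ˇ`. -/
def walshFT (f : ℝ → ℝ) (ξ : ℝ) : ℝ := ∫ x in Set.Ici (0 : ℝ), walshe (wMul ξ x) * f x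

/-- Lebesgue measure on `ℝ⁺`. -/
def μplus : Measure ℝ := volume.restrict (Set.Ici 0)

/-- `L^p` norm (real exponent `p`) of an `ℝ≥0∞`-valued function. -/
def lpNormE (p : ℝ) (μ : Measure ℝ) (F : ℝ → ℝ≥0∞) : ℝ≥0∞ := (∫⁻ x, F x ^ p ∂μ) ^ (1 / p)

/-- The `r`-variation norm of `m` on the domain `D`. -/
def vnorm {ι E : Type*} [LinearOrder ι] [NormedAddCommGroup E] (r : ℝ) (D : Set ι)
    (m : ι → E) : ℝ≥0∞ :=
  (⨆ ξ ∈ D, (‖m ξ‖₊ : ℝ≥0∞)) +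
    ⨆ (N : ℕ) (u : Fin (N + 1) → ι) (_ : StrictMono u) (_ : ∀ i, u i ∈ D),
      (∑ i : Fin N, (‖m (u i.succ) - m (u i.castSucc)‖₊ : ℝ≥0∞) ^ r) ^ (1 / r)

/-- The Walsh `L^q`-multiplier norm. -/
def Mq (q : ℝ) (m : ℝ → ℝ) : ℝ≥0∞ :=
  ⨆ (g : ℝ → ℝ) (_ : eLpNorm g (ENNReal.ofReal q) μplus = 1),
    eLpNorm (walshFT fun ξ => m ξ * walshFT g ξ) (ENNReal.ofReal q) μplus

/-- The Walsh `L^q`-maximal-multiplier norm of a sequence of multipliers. -/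
def Mqstar (q : ℝ) (m : ℤ → ℝ → ℝ) : ℝ≥0∞ :=
  ⨆ (g : ℝ → ℝ) (_ : eLpNorm g (ENNReal.ofReal q) μplus = 1),
    lpNormE q μplus fun x => ⨆ k : ℤ, (‖walshFT (fun ξ => m k ξ * walshFT g ξ) x‖₊ : ℝ≥0∞)

/-- The `s`-variation `L^q`-multiplier norm of a sequence of multipliers. -/
def Mqs (q s : ℝ) (m : ℤ → ℝ → ℝ) : ℝ≥0∞ :=
  ⨆ (g : ℝ → ℝ) (_ : eLpNorm g (ENNReal.ofReal q) μplus = 1),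
    lpNormE q μplus fun x =>
      vnorm s (Set.univ : Set ℤ) fun k => walshFT (fun ξ => m k ξ * walshFT g ξ) x

/-- Dyadic intervals `[n 2^k, (n+1) 2^k)`. -/
def IsDyadic (I : Set ℝ) : Prop :=
  ∃ n k : ℤ, I = Set.Ico ((n : ℝ) * 2 ^ k) (((n : ℝ) + 1) * 2 ^ k)

/-- Dyadic intervals of length `2^k`. -/
def IsDyadicLen (k : ℤ) (ω : Set ℝ) : Prop :=
  ∃ n : ℤ, ω = Set.Ico ((n : ℝ) * 2 ^ k) (((n : ℝ) + 1) * 2 ^ k)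

/-- The lower half of an interval. -/
def lowerHalf (ω : Set ℝ) : Set ℝ := ω ∩ Set.Iio ((sInf ω + sSup ω) / 2)

/-- The upper half of an interval. -/
def upperHalf (ω : Set ℝ) : Set ℝ := ω ∩ Set.Ici ((sInf ω + sSup ω) / 2)

/-- A bitile `I × ω ⊆ ℝ⁺ × ℝ⁺` : a rectangle of dyadic intervals of area `2`. -/
structure Bitile where
  I : Set ℝ
  ω : Set ℝ
  hI : IsDyadic I
  hω : IsDyadic ω
  hIsub : I ⊆ Set.Ici 0
  hωsub : ω ⊆ Set.Ici 0
  harea : volume I * volume ω = 2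

/-- The `L²`-normalized Walsh wave packet of the tile `I × ω`. -/
def wavePacket (I ω : Set ℝ) (x : ℝ) : ℝ :=
  Real.sqrt (volume I).toReal * walshFT (Set.indicator ω fun _ => (1 : ℝ)) (wXor x (sInf I))

/-- `⟨f, φ_{P_l}⟩`, the pairing of `f` with the wave packet of the lower tile of `P`. -/
def walshCoef (P : Bitile) (f : ℝ → ℝ) : ℝ :=
  ∫ y in Set.Ici (0 : ℝ), f y * wavePacket P.I (lowerHalf P.ω) y

/-- The partial order on bitiles. -/
def Bitile.le (P Q : Bitile) : Prop := P.I ⊆ Q.I ∧ Q.ω ⊆ P.ω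

/-- Convexity of a set of bitiles. -/
def ConvexBitiles (S : Set Bitile) : Prop :=
  ∀ P₁ P₂ P₃ : Bitile, P₁ ∈ S → P₃ ∈ S → Bitile.le P₁ P₂ → Bitile.le P₂ P₃ → P₂ ∈ S

/-- The truncated partial Walsh-sum operator attached to a collection `Ps` of bitiles. -/
def Sk (Ps : Set Bitile) (f : ℝ → ℝ) (k : ℤ) (ξ x : ℝ) : ℝ :=
  ∑ᶠ (P : Bitile) (_ : P ∈ Ps ∧ volume P.I < 2 ^ k),
    walshCoef P f * wavePacket P.I (lowerHalf P.ω) x *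
      Set.indicator (upperHalf P.ω) (fun _ => (1 : ℝ)) ξ

/-- The partial Walsh-sum operator `S[f](ξ,x) = (f̂ 1_{[0,ξ)})ˇ(x)`. -/
def Spartial (f : ℝ → ℝ) (ξ x : ℝ) : ℝ :=
  walshFT (fun η => Set.indicator (Set.Ico 0 ξ) (fun _ => (1 : ℝ)) η * walshFT f η) x

/-- A tree of bitiles with top data `(ξtop, Itop)`. -/
structure WTree where
  carrier : Set Bitile
  ξtop : ℝ
  Itop : Set ℝ

/-- The defining conditions of a tree. -/
def IsTree (T : WTree) : Prop :=
  IsDyadic T.Itop ∧ 0 ≤ T.ξtop ∧ ∀ P ∈ T.carrier, P.I ⊆ T.Itop ∧ T.ξtop ∈ P.ω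

/-- `u`-overlapping trees. -/
def UOverlapping (T : WTree) : Prop := ∀ P ∈ T.carrier, T.ξtop ∈ upperHalf P.ω

/-- `l`-overlapping trees. -/
def LOverlapping (T : WTree) : Prop := ∀ P ∈ T.carrier, T.ξtop ∈ lowerHalf P.ω

/-- `T` is td-maximal among the trees in `Cc` : maximal with respect to inclusion among
trees in `Cc` with the same top data. -/
def TdMaximalAmong (T : WTree) (Cc : Set WTree) : Prop :=
  T ∈ Cc ∧ ∀ T' ∈ Cc, T'.ξtop = T.ξtop → T'.Itop = T.Itop →
    T.carrier ⊆ T'.carrier → T'.carrier ⊆ T.carrier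

/-- Order on the lower tiles of two bitiles. -/
def lowerLE (P Q : Bitile) : Prop := P.I ⊆ Q.I ∧ lowerHalf Q.ω ⊆ lowerHalf P.ω

/-- Strict order on the lower tiles of two bitiles. -/
def lowerLT (P Q : Bitile) : Prop := lowerLE P Q ∧ ¬ lowerLE Q P

/-- `l`-convexity of a set of bitiles. -/
def LConvex (S : Set Bitile) : Prop :=
  ∀ P P' P'' : Bitile, P ∈ S → P'' ∈ S → lowerLT P P' → lowerLT P' P'' → P' ∈ S

/-- A properly-sorted collection of `l`-overlapping trees. -/
def ProperlySorted (Ts : Set WTree) : Prop :=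
  (∀ T ∈ Ts, IsTree T ∧ LOverlapping T ∧ LConvex T.carrier) ∧
  (∀ T ∈ Ts, ∀ T' ∈ Ts, T ≠ T' → T.carrier ∩ T'.carrier = ∅) ∧
  (∀ T ∈ Ts, ∀ P ∈ T.carrier, ∀ T' ∈ Ts, (T'.Itop ∩ P.I).Nonempty → T'.ξtop ∉ upperHalf P.ω)

/-- The multiplier `𝒟_k = Σ_{|ω| = 2^k, ω ∩ Ξ ≠ ∅} a_ω 1_ω`. -/
def Dk (a : Set ℝ → ℝ) (Ξ : Set ℝ) (k : ℤ) (ξ : ℝ) : ℝ :=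
  ∑ᶠ (ω : Set ℝ) (_ : IsDyadicLen k ω ∧ (ω ∩ Ξ).Nonempty),
    a ω * Set.indicator ω (fun _ => (1 : ℝ)) ξ

/-- The sequence `k ↦ Σ_{|ω| = 2^k} a_ω 1_ω(ξ)`. -/
def dyadicSum (a : Set ℝ → ℝ) (ξ : ℝ) (k : ℤ) : ℝ :=
  ∑ᶠ (ω : Set ℝ) (_ : IsDyadicLen k ω), a ω * Set.indicator ω (fun _ => (1 : ℝ)) ξ

/-- A tile `I × ω ⊆ ℝ⁺ × ℝ⁺` : a rectangle of dyadic intervals of area `1`. -/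
structure WTile where
  I : Set ℝ
  ω : Set ℝ
  hI : IsDyadic I
  hω : IsDyadic ω
  hIsub : I ⊆ Set.Ici 0
  hωsub : ω ⊆ Set.Ici 0
  harea : volume I * volume ω = 1

/-- The subset of the phase plane occupied by a tile. -/
def WTile.carrier (p : WTile) : Set (ℝ × ℝ) := p.I ×ˢ p.ω

/-- The phase-plane projection `Π_S` associated to a region `S` which can be written as a
finite disjoint union of tiles (it is independent of the chosen tiling). -/
def phaseProj (S : Set (ℝ × ℝ)) (f : ℝ → ℝ) : ℝ → ℝ :=
  if h : ∃ ps : Set WTile, ps.Finite ∧ ps.PairwiseDisjoint WTile.carrier ∧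
      (⋃ p ∈ ps, p.carrier) = S then
    fun x => ∑ᶠ p ∈ h.choose,
      (∫ y in Set.Ici (0 : ℝ), f y * wavePacket p.I p.ω y) * wavePacket p.I p.ω x
  else 0

/-- The region of the phase plane occupied by a tree. -/
def treeRegion (T : WTree) : Set (ℝ × ℝ) := ⋃ P ∈ T.carrier, P.I ×ˢ P.ω

/-- `size(Ps, f) = sup_{T ⊆ Ps convex tree} |I_T|^{-1/2} ‖Π_T f‖_{L²}`. -/
def size (Ps : Set Bitile) (f : ℝ → ℝ) : ℝ≥0∞ :=
  ⨆ (T : WTree) (_ : IsTree T ∧ ConvexBitiles T.carrier ∧ T.carrier ⊆ Ps),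
    (volume T.Itop ^ (1 / 2 : ℝ))⁻¹ * eLpNorm (phaseProj (treeRegion T) f) 2 μplus


/-! ### Dyadic geometry -/

lemma dy_nest {n m k l : ℤ} (hkl : k ≤ l) {z : ℝ}
    (h1 : (n : ℝ) * 2 ^ k ≤ z) (h2 : z < ((n : ℝ) + 1) * 2 ^ k)
    (h3 : (m : ℝ) * 2 ^ l ≤ z) (h4 : z < ((m : ℝ) + 1) * 2 ^ l) :
    (m : ℝ) * 2 ^ l ≤ (n : ℝ) * 2 ^ k ∧ ((n : ℝ) + 1) * 2 ^ k ≤ ((m : ℝ) + 1) * 2 ^ l := by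
  obtain ⟨d, rfl⟩ := Int.le.dest hkl
  have hk : (0 : ℝ) < 2 ^ k := by positivity
  have e : (2 : ℝ) ^ (k + (d : ℤ)) = 2 ^ d * 2 ^ k := by
    rw [zpow_add₀ (by norm_num), zpow_natCast, mul_comm]
  rw [e] at h3 h4 ⊢
  have a1 : (m : ℝ) * 2 ^ d < n + 1 := by
    have : (m : ℝ) * 2 ^ d * 2 ^ k < (n + 1) * 2 ^ k := by nlinarith
    exact lt_of_mul_lt_mul_right this hk.le
  have a2 : (n : ℝ) < (m + 1) * 2 ^ d := by
    have : (n : ℝ) * 2 ^ k < (m + 1) * 2 ^ d * 2 ^ k := by nlinarith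
    exact lt_of_mul_lt_mul_right this hk.le
  have b1 : m * 2 ^ d < n + 1 := by exact_mod_cast a1
  have b2 : n < (m + 1) * 2 ^ d := by exact_mod_cast a2
  have c1 : (m : ℝ) * 2 ^ d ≤ n := by exact_mod_cast Int.lt_add_one_iff.mp b1
  have c2 : (n : ℝ) + 1 ≤ (m + 1) * 2 ^ d := by exact_mod_cast b2
  constructor
  · rw [← mul_assoc]; exact mul_le_mul_of_nonneg_right c1 hk.le
  · rw [← mul_assoc]; exact mul_le_mul_of_nonneg_right c2 hk.le

lemma bitile_param (P : Bitile) : ∃ n m k : ℤ,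
    P.ω = Set.Ico ((n : ℝ) * 2 ^ k) (((n : ℝ) + 1) * 2 ^ k) ∧
    P.I = Set.Ico ((m : ℝ) * 2 ^ (1 - k)) (((m : ℝ) + 1) * 2 ^ (1 - k)) := by
  obtain ⟨m, j, hI⟩ := P.hI
  obtain ⟨n, k, hω⟩ := P.hω
  have h := P.harea
  rw [hI, hω, Real.volume_Ico, Real.volume_Ico, ← ENNReal.ofReal_mul
    (by have : (0 : ℝ) < 2 ^ j := by positivity
        nlinarith)] at h
  have h2 : ((m : ℝ) + 1) * 2 ^ j - m * 2 ^ j = 2 ^ j := by ring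
  have h3 : ((n : ℝ) + 1) * 2 ^ k - n * 2 ^ k = 2 ^ k := by ring
  rw [h2, h3, ← zpow_add₀ (by norm_num)] at h
  have h4 : (2 : ℝ) ^ (j + k) = 2 ^ (1 : ℤ) := by
    have := congrArg ENNReal.toReal h
    rw [ENNReal.toReal_ofReal (by positivity)] at this
    simpa using this
  have h5 : j + k = 1 := zpow_right_injective₀ (by norm_num) (by norm_num) h4
  have h6 : j = 1 - k := by omega
  subst h6
  exact ⟨n, m, k, hω, hI⟩

def bN (P : Bitile) : ℤ := (bitile_param P).choose
def bM (P : Bitile) : ℤ := (bitile_param P).choose_spec.choose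
def bK (P : Bitile) : ℤ := (bitile_param P).choose_spec.choose_spec.choose
def bLo (P : Bitile) : ℝ := (bN P : ℝ) * 2 ^ bK P
def bHi (P : Bitile) : ℝ := ((bN P : ℝ) + 1) * 2 ^ bK P
def bMid (P : Bitile) : ℝ := ((2 * bN P : ℤ) + 1 : ℝ) * 2 ^ (bK P - 1)

lemma bOmega (P : Bitile) : P.ω = Set.Ico (bLo P) (bHi P) :=
  (bitile_param P).choose_spec.choose_spec.choose_spec.1

lemma bI (P : Bitile) :
    P.I = Set.Ico ((bM P : ℝ) * 2 ^ (1 - bK P)) (((bM P : ℝ) + 1) * 2 ^ (1 - bK P)) :=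
  (bitile_param P).choose_spec.choose_spec.choose_spec.2

lemma two_half (k : ℤ) : (2 : ℝ) ^ k = 2 * 2 ^ (k - 1) := by
  rw [zpow_sub₀ (by norm_num)]; simp; ring

lemma bLo_eq (P : Bitile) : bLo P = ((2 * bN P : ℤ) : ℝ) * 2 ^ (bK P - 1) := by
  unfold bLo; rw [two_half]; push_cast; ring

lemma bMid_eq (P : Bitile) : bMid P = ((2 * bN P + 1 : ℤ) : ℝ) * 2 ^ (bK P - 1) := by
  unfold bMid; push_cast; ring

lemma bHi_eq (P : Bitile) : bHi P = (((2 * bN P + 1 : ℤ) : ℝ) + 1) * 2 ^ (bK P - 1) := by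
  unfold bHi; rw [two_half]; push_cast; ring

lemma bLo_lt (P : Bitile) : bLo P < bMid P := by
  rw [bLo_eq, bMid]
  have : (0 : ℝ) < 2 ^ (bK P - 1) := by positivity
  nlinarith

lemma bMid_lt (P : Bitile) : bMid P < bHi P := by
  rw [bHi_eq, bMid_eq]
  have : (0 : ℝ) < 2 ^ (bK P - 1) := by positivity
  nlinarith

lemma bMid_avg (P : Bitile) : (bLo P + bHi P) / 2 = bMid P := by
  rw [bHi_eq, bMid_eq, bLo_eq]; push_cast; ring

lemma bUpper (P : Bitile) : upperHalf P.ω = Set.Ico (bMid P) (bHi P) := by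
  have h1 := bLo_lt P
  have h2 := bMid_lt P
  unfold upperHalf
  rw [bOmega, csInf_Ico (by linarith), csSup_Ico (by linarith), bMid_avg]
  ext z
  simp only [mem_inter_iff, mem_Ico, mem_Ici]
  constructor
  · rintro ⟨⟨_, b⟩, c⟩; exact ⟨c, b⟩
  · rintro ⟨c, b⟩; exact ⟨⟨by linarith, b⟩, c⟩

lemma bLower (P : Bitile) : lowerHalf P.ω = Set.Ico (bLo P) (bMid P) := by
  have h1 := bLo_lt P
  have h2 := bMid_lt P
  unfold lowerHalf
  rw [bOmega, csInf_Ico (by linarith), csSup_Ico (by linarith), bMid_avg]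
  ext z
  simp only [mem_inter_iff, mem_Ico, mem_Iio]
  constructor
  · rintro ⟨⟨a, b⟩, c⟩; exact ⟨a, c⟩
  · rintro ⟨a, c⟩; exact ⟨⟨a, by linarith⟩, c⟩

lemma bLo_nonneg (P : Bitile) : 0 ≤ bLo P := by
  have : bLo P ∈ P.ω := by
    rw [bOmega]; exact ⟨le_rfl, (bLo_lt P).trans (bMid_lt P)⟩
  exact P.hωsub this

/-- Upper halves are nested. -/
lemma nest_uu {P Q : Bitile} (h : bK P ≤ bK Q) {z : ℝ}
    (hP : bMid P ≤ z ∧ z < bHi P) (hQ : bMid Q ≤ z ∧ z < bHi Q) :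
    bMid Q ≤ bMid P ∧ bHi P ≤ bHi Q := by
  rw [bMid_eq, bHi_eq] at *
  rw [bMid_eq, bHi_eq]
  exact dy_nest (by omega) hP.1 hP.2 hQ.1 hQ.2

lemma nest_ll {P Q : Bitile} (h : bK P ≤ bK Q) {z : ℝ}
    (hP : bLo P ≤ z ∧ z < bMid P) (hQ : bLo Q ≤ z ∧ z < bMid Q) :
    bLo Q ≤ bLo P ∧ bMid P ≤ bMid Q := by
  rw [bLo_eq, bMid] at *
  rw [bLo_eq, bMid]
  exact dy_nest (by omega) hP.1 hP.2 hQ.1 hQ.2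

lemma nest_ou {P Q : Bitile} (h : bK P < bK Q) {z : ℝ}
    (hP : bLo P ≤ z ∧ z < bHi P) (hQ : bMid Q ≤ z ∧ z < bHi Q) :
    bMid Q ≤ bLo P ∧ bHi P ≤ bHi Q := by
  rw [bMid_eq, bHi_eq Q] at *
  rw [bLo, bHi] at *
  exact dy_nest (by omega) hP.1 hP.2 hQ.1 hQ.2

lemma nest_ol {P Q : Bitile} (h : bK P < bK Q) {z : ℝ}
    (hP : bLo P ≤ z ∧ z < bHi P) (hQ : bLo Q ≤ z ∧ z < bMid Q) :
    bLo Q ≤ bLo P ∧ bHi P ≤ bMid Q := by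
  rw [bLo_eq Q, bMid] at *
  rw [bLo, bHi] at *
  exact dy_nest (by omega) hP.1 hP.2 hQ.1 hQ.2

lemma bI_sub {P Q : Bitile} {x : ℝ} (hP : x ∈ P.I) (hQ : x ∈ Q.I) (h : bK Q ≤ bK P) :
    P.I ⊆ Q.I := by
  rw [bI] at hP hQ
  rw [bI P, bI Q]
  have := dy_nest (show 1 - bK P ≤ 1 - bK Q by omega) hP.1 hP.2 hQ.1 hQ.2
  exact Set.Ico_subset_Ico this.1 this.2

lemma b_ext {P Q : Bitile} {x z : ℝ} (hP : x ∈ P.I) (hQ : x ∈ Q.I) (h : bK P = bK Q)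
    (zP : z ∈ P.ω) (zQ : z ∈ Q.ω) : P = Q := by
  have hI : P.I = Q.I := (bI_sub hP hQ h.ge).antisymm (bI_sub hQ hP h.le)
  have hω : P.ω = Q.ω := by
    rw [bOmega] at zP zQ
    rw [bOmega, bOmega]
    have a := dy_nest h.le zP.1 zP.2 zQ.1 zQ.2
    have b := dy_nest h.ge zQ.1 zQ.2 zP.1 zP.2
    exact (Set.Ico_subset_Ico a.1 a.2).antisymm (Set.Ico_subset_Ico b.1 b.2)
  cases P; cases Q; simp_all

lemma b_vol {P : Bitile} : volume P.I = ENNReal.ofReal (2 ^ (1 - bK P)) := by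
  rw [bI, Real.volume_Ico]; congr 1; ring

lemma b_vol_lt {P Q : Bitile} {V : ℝ≥0∞} (hQ : volume Q.I < V) (hP : ¬ volume P.I < V) :
    bK P < bK Q := by
  by_contra hc
  apply hP
  refine lt_of_le_of_lt ?_ hQ
  rw [b_vol, b_vol]
  exact ENNReal.ofReal_le_ofReal (zpow_le_zpow_right₀ (by norm_num) (by omega))

/-! ### Variation norms -/

lemma dedupe (u : ℕ → ℝ) (hu : Monotone u) (D : Set ℝ) (hD : ∀ i, u i ∈ D)
    (g : ℝ → ℝ → ℝ≥0∞) (hg : ∀ x, g x x = 0) (N : ℕ) :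
    ∃ (M : ℕ) (w : Fin (M + 1) → ℝ), StrictMono w ∧ (∀ i, w i ∈ D) ∧ w (Fin.last M) = u N ∧
      ∑ i : Fin M, g (w i.succ) (w i.castSucc) = ∑ i ∈ Finset.range N, g (u (i + 1)) (u i) := by
  induction N with
  | zero => exact ⟨0, fun _ => u 0, fun a b h => absurd h (by omega), fun _ => hD 0, rfl, by simp⟩
  | succ N ih =>
    obtain ⟨M, w, hw, hwD, hl, hs⟩ := ih
    rw [Finset.sum_range_succ]
    rcases (hu (Nat.le_succ N)).eq_or_lt with h | h
    · refine ⟨M, w, hw, hwD, hl.trans h, ?_⟩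
      have h' : u (N + 1) = u N := h.symm
      rw [hs, h', hg, add_zero]
    · refine ⟨M + 1, Fin.snoc (α := fun _ => ℝ) w (u (N + 1)), ?_, ?_, by simp, ?_⟩
      · rw [Fin.strictMono_iff_lt_succ]
        intro i
        refine Fin.lastCases ?_ (fun j => ?_) i
        · rw [Fin.succ_last, Fin.snoc_last, Fin.snoc_castSucc, hl]; exact h
        · rw [Fin.succ_castSucc, Fin.snoc_castSucc, Fin.snoc_castSucc]
          exact hw (Fin.castSucc_lt_succ)
      · intro i
        refine Fin.lastCases ?_ (fun j => ?_) i
        · simpa using hD _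
        · simpa using hwD j
      · rw [Fin.sum_univ_castSucc]
        congr 1
        · rw [← hs]
          refine Finset.sum_congr rfl fun j _ => ?_
          rw [Fin.succ_castSucc, Fin.snoc_castSucc, Fin.snoc_castSucc]
        · rw [Fin.succ_last, Fin.snoc_last, Fin.snoc_castSucc, hl]

lemma var_mono (r : ℝ) (hr : 1 ≤ r) (D : Set ℝ) (m : ℝ → ℝ) (N : ℕ) (u : Fin (N + 1) → ℝ)
    (hu : Monotone u) (hD : ∀ i, u i ∈ D) :
    ∑ i : Fin N, (‖m (u i.succ) - m (u i.castSucc)‖₊ : ℝ≥0∞) ^ r ≤ (vnorm r D m) ^ r := by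
  have hr0 : 0 < r := by linarith
  let v : ℕ → ℝ := fun i => u ⟨min i N, by omega⟩
  have hv : Monotone v := fun a b h => hu (by simp only [Fin.mk_le_mk]; omega)
  obtain ⟨M, w, hw, hwD, -, hs⟩ := dedupe v hv D (fun i => hD _)
    (fun a b => (‖m a - m b‖₊ : ℝ≥0∞) ^ r) (fun x => by simp [hr0]) N
  have e : ∑ i : Fin N, (‖m (u i.succ) - m (u i.castSucc)‖₊ : ℝ≥0∞) ^ r =
      ∑ i ∈ Finset.range N, (‖m (v (i + 1)) - m (v i)‖₊ : ℝ≥0∞) ^ r := by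
    rw [← Fin.sum_univ_eq_sum_range (fun i => (‖m (v (i + 1)) - m (v i)‖₊ : ℝ≥0∞) ^ r)]
    refine Finset.sum_congr rfl fun i _ => ?_
    have h1 : v (i + 1) = u i.succ := by
      simp only [v]; congr 1; ext; simp
    have h2 : v i = u i.castSucc := by
      simp only [v]; congr 1; ext; simp
    rw [h1, h2]
  rw [e, ← hs]
  rw [← ENNReal.rpow_inv_le_iff hr0, ← one_div]
  unfold vnorm
  refine le_trans ?_ le_add_self
  exact le_iSup_of_le M (le_iSup_of_le w (le_iSup_of_le hw (le_iSup_of_le hwD le_rfl)))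

lemma norm_le_vnorm (r : ℝ) (D : Set ℝ) (m : ℝ → ℝ) {ξ : ℝ} (h : ξ ∈ D) :
    (‖m ξ‖₊ : ℝ≥0∞) ≤ vnorm r D m := by
  unfold vnorm
  refine le_trans ?_ le_self_add
  exact le_iSup₂_of_le ξ h le_rfl

lemma seven (r : ℝ) (hr : 1 ≤ r) (n : ℝ≥0∞) (S : ℝ≥0∞) (A : ℝ≥0∞)
    (hA : A ≤ n * S ^ r + 2 * n * (2 * S) ^ r) : A ^ (1 / r) ≤ 6 * n ^ (1 / r) * S := by
  have hr0 : 0 < r := by linarith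
  rw [one_div, ENNReal.rpow_inv_le_iff hr0, ENNReal.mul_rpow_of_nonneg _ _ hr0.le,
    ENNReal.mul_rpow_of_nonneg _ _ hr0.le, ENNReal.rpow_inv_rpow hr0.ne']
  refine hA.trans ?_
  rw [ENNReal.mul_rpow_of_nonneg _ _ hr0.le]
  have h2 : (1 : ℝ≥0∞) ≤ 2 ^ r := ENNReal.one_le_rpow (by norm_num) hr0
  have h3 : (3 : ℝ≥0∞) ≤ 3 ^ r := by
    conv_lhs => rw [← ENNReal.rpow_one 3]
    exact ENNReal.rpow_le_rpow_of_exponent_le (by norm_num) hr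
  have h6 : (6 : ℝ≥0∞) ^ r = 3 ^ r * 2 ^ r := by
    rw [← ENNReal.mul_rpow_of_nonneg _ _ hr0.le]; norm_num
  calc n * S ^ r + 2 * n * (2 ^ r * S ^ r) ≤ 2 ^ r * (n * S ^ r) + 2 * n * (2 ^ r * S ^ r) := by
        gcongr ?_ + _; exact le_mul_of_one_le_left' h2
    _ = 3 * (2 ^ r * (n * S ^ r)) := by ring
    _ ≤ 3 ^ r * (2 ^ r * (n * S ^ r)) := by gcongr
    _ = _ := by rw [h6]; ring

lemma count_bad {N : ℕ} {τ : Type*} (B : Finset (Fin N)) (Ts : Finset τ) (R : Fin N → τ → Prop)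
    (hex : ∀ i ∈ B, ∃ T ∈ Ts, R i T)
    (hinj : ∀ i ∈ B, ∀ j ∈ B, i < j → ∀ T ∈ Ts, R i T → R j T → False) :
    B.card ≤ Ts.card := by
  rcases B.eq_empty_or_nonempty with rfl | ⟨i₀, hi₀⟩
  · simp
  have : Nonempty τ := ⟨(hex i₀ hi₀).choose⟩
  choose! f hf hR using hex
  refine Finset.card_le_card_of_injOn f hf ?_
  intro i hi j hj hij
  by_contra hne
  rcases lt_or_gt_of_ne hne with h | h
  · exact hinj i hi j hj h (f i) (hf i hi) (hR i hi) (hij ▸ hR j hj)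
  · exact hinj j hj i hi h (f i) (hf i hi) (hij ▸ hR j hj) (hR i hi)

lemma abs_bound {τ : Type*} (Ts : Finset τ) (r : ℝ) (hr : 1 ≤ r) (D : Set ℝ) (F : ℝ → ℝ)
    (G : τ → ℝ → ℝ) (φ : τ → ℝ → ℝ) (S : ℝ≥0∞)
    (hφ : ∀ T ∈ Ts, MonotoneOn (φ T) D) (hφD : ∀ T ∈ Ts, ∀ ξ ∈ D, φ T ξ ∈ D)
    (hG : ∀ T ∈ Ts, vnorm r D (G T) ≤ S)
    (hsup : ∀ ξ ∈ D, ∃ T ∈ Ts, F ξ = G T (φ T ξ))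
    (hbad : ∀ (N : ℕ) (u : Fin (N + 1) → ℝ), StrictMono u → (∀ i, u i ∈ D) →
      ∃ B : Finset (Fin N), B.card ≤ 2 * Ts.card ∧ ∀ i, i ∉ B → ∃ T ∈ Ts,
        F (u i.succ) = G T (φ T (u i.succ)) ∧ F (u i.castSucc) = G T (φ T (u i.castSucc))) :
    vnorm r D F ≤ 7 * (Ts.card : ℝ≥0∞) ^ (1 / r) * S := by
  have hr0 : 0 < r := by linarith
  have hS : ∀ ξ ∈ D, (‖F ξ‖₊ : ℝ≥0∞) ≤ S := by
    intro ξ hξ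
    obtain ⟨T, hT, e⟩ := hsup ξ hξ
    rw [e]
    exact (norm_le_vnorm r D (G T) (hφD T hT ξ hξ)).trans (hG T hT)
  have h7 : 7 * (Ts.card : ℝ≥0∞) ^ (1 / r) * S = (Ts.card : ℝ≥0∞) ^ (1 / r) * S +
      6 * (Ts.card : ℝ≥0∞) ^ (1 / r) * S := by ring
  rw [h7]
  unfold vnorm
  refine add_le_add ?_ ?_
  · refine iSup₂_le fun ξ hξ => (hS ξ hξ).trans ?_
    obtain ⟨T, hT, -⟩ := hsup ξ hξ
    have h1 : (1 : ℝ≥0∞) ≤ Ts.card := by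
      exact_mod_cast Finset.card_pos.mpr ⟨T, hT⟩
    exact le_mul_of_one_le_left' (ENNReal.one_le_rpow h1 (by positivity))
  · refine iSup_le fun N => iSup_le fun u => iSup_le fun hu => iSup_le fun huD => ?_
    obtain ⟨B, hB, hgood⟩ := hbad N u hu huD
    apply seven r hr
    rw [← Finset.sum_compl_add_sum B]
    refine add_le_add ?_ ?_
    · let g : Fin N → τ → ℝ≥0∞ := fun i T =>
        (‖G T (φ T (u i.succ)) - G T (φ T (u i.castSucc))‖₊ : ℝ≥0∞) ^ r
      have s1 : ∑ i ∈ Bᶜ, (‖F (u i.succ) - F (u i.castSucc)‖₊ : ℝ≥0∞) ^ r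
          ≤ ∑ i ∈ Bᶜ, ∑ T ∈ Ts, g i T := by
        refine Finset.sum_le_sum fun i hi => ?_
        obtain ⟨T, hT, e1, e2⟩ := hgood i (by simpa using hi)
        rw [e1, e2]
        exact Finset.single_le_sum (f := fun T => g i T) (fun _ _ => zero_le) hT
      have s2 : ∑ i ∈ Bᶜ, ∑ T ∈ Ts, g i T ≤ ∑ i : Fin N, ∑ T ∈ Ts, g i T :=
        Finset.sum_le_sum_of_subset (Finset.subset_univ _)
      have s3 : ∑ i : Fin N, ∑ T ∈ Ts, g i T = ∑ T ∈ Ts, ∑ i : Fin N, g i T :=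
        Finset.sum_comm
      have s4 : ∑ T ∈ Ts, ∑ i : Fin N, g i T ≤ ∑ T ∈ Ts, S ^ r := by
        refine Finset.sum_le_sum fun T hT => ?_
        have key := var_mono r hr D (G T) N (fun i => φ T (u i))
          (fun a b h => hφ T hT (huD a) (huD b) (hu.monotone h))
          (fun i => hφD T hT _ (huD i))
        exact key.trans (ENNReal.rpow_le_rpow (hG T hT) hr0.le)
      refine s1.trans (s2.trans (s3.le.trans (s4.trans ?_)))
      simp
    · calc ∑ i ∈ B, (‖F (u i.succ) - F (u i.castSucc)‖₊ : ℝ≥0∞) ^ r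
          ≤ ∑ i ∈ B, (2 * S) ^ r := by
            refine Finset.sum_le_sum fun i _ => ENNReal.rpow_le_rpow ?_ hr0.le
            rw [two_mul]
            refine le_trans ?_ (add_le_add (hS _ (huD i.succ)) (hS _ (huD i.castSucc)))
            exact_mod_cast nnnorm_sub_le _ _
        _ = B.card * (2 * S) ^ r := by simp
        _ ≤ _ := by
            gcongr
            exact_mod_cast hB

/-! ### Assembling -/

lemma fs_eq (c : Bitile → ℝ) (p : Bitile → Prop) (ξ : ℝ) :
    ∑ᶠ (P : Bitile) (_ : p P), c P * Set.indicator (upperHalf P.ω) (fun _ => (1 : ℝ)) ξ =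
      ∑ᶠ P ∈ {P : Bitile | p P ∧ ξ ∈ upperHalf P.ω}, c P := by
  refine finsum_congr fun P => ?_
  by_cases h1 : p P <;> by_cases h2 : ξ ∈ upperHalf P.ω <;> simp [h1, h2]

/-- Bitiles of the truncated stack whose upper frequency half contains `ξ`. -/
def actSet (Ps : Set Bitile) (V : ℝ≥0∞) (ξ : ℝ) : Set Bitile :=
  {P | (P ∈ Ps ∧ volume P.I < V) ∧ ξ ∈ upperHalf P.ω}

lemma mem_act {Ps : Set Bitile} {V : ℝ≥0∞} {ξ : ℝ} {P : Bitile} :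
    P ∈ actSet Ps V ξ ↔ P ∈ Ps ∧ volume P.I < V ∧ bMid P ≤ ξ ∧ ξ < bHi P := by
  unfold actSet
  rw [mem_ofPred_eq, bUpper, mem_Ico, and_assoc]

lemma core_bound (r : ℝ) (hr : 1 ≤ r) (Ps : Set Bitile) (Ts : Set WTree) (hTs : Ts.Finite)
    (hPs : Ps = ⋃ T ∈ Ts, T.carrier) (c : Bitile → ℝ) (V : ℝ≥0∞) (φ : WTree → ℝ → ℝ)
    (hφ : ∀ T ∈ Ts, MonotoneOn (φ T) (Set.Ici 0))
    (hφD : ∀ T ∈ Ts, ∀ ξ ∈ Set.Ici (0 : ℝ), φ T ξ ∈ Set.Ici (0 : ℝ))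
    (hφe : ∀ T ∈ Ts, ∀ ξ ∈ Set.Ici (0 : ℝ), ∀ P ∈ T.carrier,
      (bMid P ≤ φ T ξ ∧ φ T ξ < bHi P) ↔ (volume P.I < V ∧ bMid P ≤ ξ ∧ ξ < bHi P))
    (hsup : ∀ ξ ∈ Set.Ici (0 : ℝ), ∃ T ∈ Ts, actSet Ps V ξ ⊆ T.carrier)
    (hbad : ∀ (N : ℕ) (u : Fin (N + 1) → ℝ), StrictMono u → (∀ i, u i ∈ Set.Ici (0 : ℝ)) →
      ∃ B : Finset (Fin N), B.card ≤ 2 * hTs.toFinset.card ∧ ∀ i, i ∉ B → ∃ T ∈ Ts,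
        actSet Ps V (u i.succ) ⊆ T.carrier ∧ actSet Ps V (u i.castSucc) ⊆ T.carrier) :
    vnorm r (Set.Ici 0) (fun ξ => ∑ᶠ (P : Bitile) (_ : P ∈ Ps ∧ volume P.I < V),
        c P * Set.indicator (upperHalf P.ω) (fun _ => (1 : ℝ)) ξ) ≤
      ENNReal.ofReal 7 * (Ts.ncard : ℝ≥0∞) ^ (1 / r) *
        ⨆ T ∈ Ts, vnorm r (Set.Ici 0) (fun ξ =>
          ∑ᶠ P ∈ T.carrier, c P * Set.indicator (upperHalf P.ω) (fun _ => (1 : ℝ)) ξ) := by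
  rw [Set.ncard_eq_toFinset_card Ts hTs, show ENNReal.ofReal 7 = 7 by simp]
  have hsub : ∀ T ∈ Ts, T.carrier ⊆ Ps := fun T hT => hPs ▸ Set.subset_biUnion_of_mem hT
  have agree : ∀ T ∈ Ts, ∀ ξ ∈ Set.Ici (0 : ℝ), actSet Ps V ξ ⊆ T.carrier →
      (∑ᶠ (P : Bitile) (_ : P ∈ Ps ∧ volume P.I < V),
        c P * Set.indicator (upperHalf P.ω) (fun _ => (1 : ℝ)) ξ) =
      ∑ᶠ P ∈ T.carrier, c P * Set.indicator (upperHalf P.ω) (fun _ => (1 : ℝ)) (φ T ξ) := by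
    intro T hT ξ hξ hA
    rw [fs_eq c (fun P => P ∈ Ps ∧ volume P.I < V), fs_eq c (fun P => P ∈ T.carrier)]
    have : {P : Bitile | (P ∈ Ps ∧ volume P.I < V) ∧ ξ ∈ upperHalf P.ω} =
        {P : Bitile | P ∈ T.carrier ∧ φ T ξ ∈ upperHalf P.ω} := by
      ext P
      change P ∈ actSet Ps V ξ ↔ P ∈ T.carrier ∧ φ T ξ ∈ upperHalf P.ω
      constructor
      · intro h
        refine ⟨hA h, ?_⟩
        rw [bUpper]
        exact (hφe T hT ξ hξ P (hA h)).mpr (mem_act.mp h).2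
      · rintro ⟨h1, h2⟩
        rw [bUpper] at h2
        exact mem_act.mpr ⟨hsub T hT h1, (hφe T hT ξ hξ P h1).mp h2⟩
    rw [this]
  refine abs_bound hTs.toFinset r hr (Set.Ici 0) _ (fun T ξ =>
    ∑ᶠ P ∈ T.carrier, c P * Set.indicator (upperHalf P.ω) (fun _ => (1 : ℝ)) ξ) φ _ ?_ ?_ ?_ ?_ ?_
  · exact fun T hT => hφ T (hTs.mem_toFinset.mp hT)
  · exact fun T hT => hφD T (hTs.mem_toFinset.mp hT)
  · exact fun T hT => le_iSup₂_of_le T (hTs.mem_toFinset.mp hT) le_rfl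
  · intro ξ hξ
    obtain ⟨T, hT, h⟩ := hsup ξ hξ
    exact ⟨T, hTs.mem_toFinset.mpr hT, agree T hT ξ hξ h⟩
  · intro N u hu huD
    obtain ⟨B, hB, h⟩ := hbad N u hu huD
    refine ⟨B, hB, fun i hi => ?_⟩
    obtain ⟨T, hT, h1, h2⟩ := h i hi
    exact ⟨T, hTs.mem_toFinset.mpr hT, agree T hT _ (huD _) h1, agree T hT _ (huD _) h2⟩

lemma bMid_pos (P : Bitile) : 0 < bMid P := (bLo_nonneg P).trans_lt (bLo_lt P)

/-! ### The `u`-overlapping case -/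

lemma phi_u (T : WTree) (hfin : T.carrier.Finite) (hU : UOverlapping T) (V : ℝ≥0∞) :
    ∃ φ : ℝ → ℝ, MonotoneOn φ (Set.Ici 0) ∧ (∀ ξ ∈ Set.Ici (0 : ℝ), φ ξ ∈ Set.Ici (0 : ℝ)) ∧
      ∀ ξ ∈ Set.Ici (0 : ℝ), ∀ P ∈ T.carrier,
      (bMid P ≤ φ ξ ∧ φ ξ < bHi P) ↔ (volume P.I < V ∧ bMid P ≤ ξ ∧ ξ < bHi P) := by
  rcases Set.eq_empty_or_nonempty {P | P ∈ T.carrier ∧ volume P.I < V} with h0 | h0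
  · refine ⟨fun _ => 0, fun _ _ _ _ _ => le_rfl, fun _ _ => Set.self_mem_Ici, fun ξ _ P hP => ?_⟩
    constructor
    · rintro ⟨h, -⟩; exact absurd h (not_le.mpr (bMid_pos P))
    · rintro ⟨h, -⟩
      exact absurd (show P ∈ {P | P ∈ T.carrier ∧ volume P.I < V} from ⟨hP, h⟩) (by simp [h0])
  · obtain ⟨P0, ⟨hP0, hV0⟩, hmin⟩ := Set.exists_min_image _ bK
      (hfin.subset (fun P hP => hP.1)) h0
    have t0 := hU P0 hP0
    rw [bUpper] at t0
    have hbig : ∀ P ∈ T.carrier, ¬ volume P.I < V → bMid P0 ≤ bLo P ∧ bHi P ≤ bHi P0 := by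
      intro P hP hV
      have t := hU P hP
      rw [bUpper] at t
      exact nest_ou (b_vol_lt hV0 hV) ⟨(bLo_lt P).le.trans t.1, t.2⟩ t0
    have hp := bMid_pos P0
    have hq := bMid_lt P0
    refine ⟨fun ξ => if bMid P0 ≤ ξ ∧ ξ < bHi P0 then bMid P0 else ξ, ?_, ?_, ?_⟩
    · intro a _ b _ hab
      dsimp only
      split_ifs with h1 h2 h2
      · exact le_rfl
      · linarith [h1.1]
      · by_contra hc
        exact h1 ⟨by linarith, by linarith [h2.2]⟩
      · exact hab
    · intro ξ hξ
      dsimp only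
      split_ifs
      · exact hp.le
      · exact hξ
    · intro ξ hξ P hP
      dsimp only
      split_ifs with h1
      · constructor
        · intro h
          by_cases hV : volume P.I < V
          · have := nest_uu (hmin P ⟨hP, hV⟩) ⟨le_rfl, hq⟩ h
            exact ⟨hV, by linarith [h1.1], by linarith [h1.2]⟩
          · have := hbig P hP hV
            have := bLo_lt P
            linarith [h.1]
        · rintro ⟨hV, h⟩
          have := nest_uu (hmin P ⟨hP, hV⟩) h1 h
          exact ⟨by linarith, by linarith⟩
      · constructor
        · intro h
          refine ⟨?_, h⟩
          by_contra hV
          have := hbig P hP hV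
          have := bLo_lt P
          exact h1 ⟨by linarith [h.1], by linarith [h.2]⟩
        · exact fun h => h.2

lemma case_u (x : ℝ) (Ps : Set Bitile) (hfin : Ps.Finite) (hx : ∀ P ∈ Ps, x ∈ P.I)
    (Ts : Set WTree) (hTs : Ts.Finite) (hne : Ts.Nonempty) (hPs : Ps = ⋃ T ∈ Ts, T.carrier)
    (h : ∀ T ∈ Ts, IsTree T ∧ UOverlapping T ∧
        TdMaximalAmong T {T' | IsTree T' ∧ UOverlapping T' ∧ T'.carrier ⊆ Ps}) (V : ℝ≥0∞) :
    (∀ ξ ∈ Set.Ici (0 : ℝ), ∃ T ∈ Ts, actSet Ps V ξ ⊆ T.carrier) ∧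
    ∀ (N : ℕ) (u : Fin (N + 1) → ℝ), StrictMono u → (∀ i, u i ∈ Set.Ici (0 : ℝ)) →
      ∃ B : Finset (Fin N), B.card ≤ 2 * hTs.toFinset.card ∧ ∀ i, i ∉ B → ∃ T ∈ Ts,
        actSet Ps V (u i.succ) ⊆ T.carrier ∧ actSet Ps V (u i.castSucc) ⊆ T.carrier := by
  have hsub : ∀ T ∈ Ts, T.carrier ⊆ Ps := fun T hT => hPs ▸ Set.subset_biUnion_of_mem hT
  have hcov : ∀ P ∈ Ps, ∃ T ∈ Ts, P ∈ T.carrier := by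
    intro P hP
    rw [hPs] at hP
    simpa using hP
  have htop : ∀ T ∈ Ts, ∀ P ∈ T.carrier, bMid P ≤ T.ξtop ∧ T.ξtop < bHi P := by
    intro T hT P hP
    have := (h T hT).2.1 P hP
    rwa [bUpper] at this
  -- everything above a member of a tree is in the tree
  have hup : ∀ T ∈ Ts, ∀ P ∈ T.carrier, ∀ Q ∈ Ps, bK P ≤ bK Q → bMid Q ≤ bMid P →
      bHi P ≤ bHi Q → Q ∈ T.carrier := by
    intro T hT P hP Q hQ hk h1 h2
    obtain ⟨⟨hd, h0, hT1⟩, hT2, hT3, hmax⟩ := h T hT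
    have hxQ : T.ξtop ∈ upperHalf Q.ω := by
      have := htop T hT P hP
      rw [bUpper]
      exact ⟨by linarith, by linarith⟩
    have hI : Q.I ⊆ P.I := bI_sub (hx Q hQ) (hx P (hsub T hT hP)) hk
    refine hmax ⟨insert Q T.carrier, T.ξtop, T.Itop⟩ ⟨⟨hd, h0, ?_⟩, ?_, ?_⟩ rfl rfl
      (Set.subset_insert _ _) (Set.mem_insert _ _)
    · intro P' hP'
      rcases hP' with rfl | hP'
      · exact ⟨hI.trans (hT1 P hP).1, hxQ.1⟩
      · exact hT1 P' hP'
    · intro P' hP'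
      rcases hP' with rfl | hP'
      · exact hxQ
      · exact hT2 P' hP'
    · exact Set.insert_subset hQ (hsub T hT)
  have hminex : ∀ ξ, (actSet Ps V ξ).Nonempty →
      ∃ P ∈ actSet Ps V ξ, ∀ Q ∈ actSet Ps V ξ, bK P ≤ bK Q := fun ξ hξ =>
    Set.exists_min_image _ bK (hfin.subset fun P hP => (mem_act.mp hP).1) hξ
  have hin : ∀ ξ, ∀ P ∈ actSet Ps V ξ, (∀ Q ∈ actSet Ps V ξ, bK P ≤ bK Q) →
      ∀ T ∈ Ts, P ∈ T.carrier → actSet Ps V ξ ⊆ T.carrier := by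
    intro ξ P hP hmin T hT hPT Q hQ
    have hP' := mem_act.mp hP
    have hQ' := mem_act.mp hQ
    have := nest_uu (hmin Q hQ) hP'.2.2 hQ'.2.2
    exact hup T hT P hPT Q hQ'.1 (hmin Q hQ) this.1 this.2
  have hsup : ∀ ξ, ∃ T ∈ Ts, actSet Ps V ξ ⊆ T.carrier := by
    intro ξ
    rcases Set.eq_empty_or_nonempty (actSet Ps V ξ) with h0 | h0
    · obtain ⟨T, hT⟩ := hne
      exact ⟨T, hT, by simp [h0]⟩
    · obtain ⟨P, hP, hmin⟩ := hminex ξ h0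
      obtain ⟨T, hT, hPT⟩ := hcov P (mem_act.mp hP).1
      exact ⟨T, hT, hin ξ P hP hmin T hT hPT⟩
  refine ⟨fun ξ _ => hsup ξ, ?_⟩
  intro N u hu huD
  refine ⟨Finset.univ.filter fun i => ¬ ∃ T ∈ Ts,
    actSet Ps V (u i.succ) ⊆ T.carrier ∧ actSet Ps V (u i.castSucc) ⊆ T.carrier, ?_, ?_⟩
  swap
  · intro i hi
    by_contra hc
    exact hi (by simpa using hc)
  refine le_trans ?_ (Nat.le_mul_of_pos_left _ two_pos)
  refine count_bad _ _ (fun i T => ∃ P ∈ actSet Ps V (u i.castSucc),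
    ∃ Q ∈ actSet Ps V (u i.succ), ¬ (bMid P ≤ u i.succ ∧ u i.succ < bHi P) ∧
      ¬ (bMid Q ≤ u i.castSucc ∧ u i.castSucc < bHi Q) ∧
      (∀ Q' ∈ actSet Ps V (u i.succ), bK Q ≤ bK Q') ∧ (bMid P ≤ T.ξtop ∧ T.ξtop < bHi P) ∧
      ∀ T' ∈ Ts, (bMid P ≤ T'.ξtop ∧ T'.ξtop < bHi P) → T'.ξtop ≤ T.ξtop) ?_ ?_
  · intro i hi
    have hi' := (Finset.mem_filter.mp hi).2
    rcases Set.eq_empty_or_nonempty (actSet Ps V (u i.castSucc)) with h0 | h0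
    · exfalso
      obtain ⟨T, hT, hA⟩ := hsup (u i.succ)
      exact hi' ⟨T, hT, hA, by simp [h0]⟩
    rcases Set.eq_empty_or_nonempty (actSet Ps V (u i.succ)) with h1 | h1
    · exfalso
      obtain ⟨T, hT, hA⟩ := hsup (u i.castSucc)
      exact hi' ⟨T, hT, by simp [h1], hA⟩
    obtain ⟨P, hP, hPm⟩ := hminex _ h0
    obtain ⟨Q, hQ, hQm⟩ := hminex _ h1
    have hP' := mem_act.mp hP
    have hQ' := mem_act.mp hQ
    obtain ⟨T0, hT0, hPT0⟩ := hcov P hP'.1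
    obtain ⟨T1, hT1, hQT1⟩ := hcov Q hQ'.1
    obtain ⟨T, ⟨hT, hTP⟩, hTm⟩ := Set.exists_max_image
      {T | T ∈ Ts ∧ (bMid P ≤ T.ξtop ∧ T.ξtop < bHi P)} WTree.ξtop
      (hTs.subset fun T hT => hT.1) ⟨T0, hT0, htop T0 hT0 P hPT0⟩
    refine ⟨T, hTs.mem_toFinset.mpr hT, P, hP, Q, hQ, ?_, ?_, hQm, hTP,
      fun T' hT' h' => hTm T' ⟨hT', h'⟩⟩
    · intro hv
      refine hi' ⟨T1, hT1, hin _ Q hQ hQm T1 hT1 hQT1, fun Q' hQ'' => ?_⟩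
      apply hin _ Q hQ hQm T1 hT1 hQT1
      have a := mem_act.mp hQ''
      have := nest_uu (hPm Q' hQ'') hP'.2.2 a.2.2
      exact mem_act.mpr ⟨a.1, a.2.1, by linarith, by linarith⟩
    · intro hv
      refine hi' ⟨T0, hT0, fun Q' hQ'' => ?_, hin _ P hP hPm T0 hT0 hPT0⟩
      apply hin _ P hP hPm T0 hT0 hPT0
      have a := mem_act.mp hQ''
      have := nest_uu (hQm Q' hQ'') hQ'.2.2 a.2.2
      exact mem_act.mpr ⟨a.1, a.2.1, by linarith, by linarith⟩
  · rintro i - j - hij T hT ⟨P, hP, Q, hQ, hvP, huQ, hQm, hTP, hTm⟩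
      ⟨P', hP', -, -, -, -, -, hTP', hTm'⟩
    have huv : u i.castSucc < u i.succ := hu Fin.castSucc_lt_succ
    have hvu : u i.succ ≤ u j.castSucc := hu.monotone (by
      rw [Fin.le_def]; simpa using Fin.lt_def.mp hij)
    have aP := mem_act.mp hP
    have aQ := mem_act.mp hQ
    have aP' := mem_act.mp hP'
    have hk : bK P ≤ bK P' := by
      by_contra hc
      have := nest_uu (show bK P' ≤ bK P by omega) hTP' hTP
      exact hvP ⟨by linarith [aP.2.2.1], by linarith [aP'.2.2.2]⟩
    have n1 := nest_uu hk hTP hTP'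
    have hvP' : bMid P' ≤ u i.succ ∧ u i.succ < bHi P' :=
      ⟨by linarith [aP.2.2.1], by linarith [aP'.2.2.2]⟩
    have hkQ := hQm P' (mem_act.mpr ⟨aP'.1, aP'.2.1, hvP'⟩)
    have n2 := nest_uu hkQ aQ.2.2 hvP'
    obtain ⟨T1, hT1, hQT1⟩ := hcov Q aQ.1
    have t1 := htop T1 hT1 Q hQT1
    have le1 := hTm' T1 hT1 ⟨by linarith, by linarith⟩
    have lt1 : T.ξtop < u i.succ := by
      by_contra hc
      exact hvP ⟨by linarith [aP.2.2.1], by linarith⟩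
    have hTQ : bMid Q ≤ T.ξtop ∧ T.ξtop < bHi Q := ⟨by linarith, by linarith [aQ.2.2.2]⟩
    rcases le_total (bK P) (bK Q) with hc | hc
    · have := nest_uu hc hTP hTQ
      exact huQ ⟨by linarith [aP.2.2.1], by linarith [aP.2.2.2]⟩
    · have := nest_uu hc hTQ hTP
      exact hvP ⟨by linarith [aQ.2.2.1], by linarith [aQ.2.2.2]⟩

/-! ### The `l`-overlapping case -/

lemma phi_l (T : WTree) (hfin : T.carrier.Finite) (hL : LOverlapping T) (V : ℝ≥0∞) :
    ∃ φ : ℝ → ℝ, MonotoneOn φ (Set.Ici 0) ∧ (∀ ξ ∈ Set.Ici (0 : ℝ), φ ξ ∈ Set.Ici (0 : ℝ)) ∧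
      ∀ ξ ∈ Set.Ici (0 : ℝ), ∀ P ∈ T.carrier,
      (bMid P ≤ φ ξ ∧ φ ξ < bHi P) ↔ (volume P.I < V ∧ bMid P ≤ ξ ∧ ξ < bHi P) := by
  rcases Set.eq_empty_or_nonempty {P | P ∈ T.carrier ∧ volume P.I < V} with h0 | h0
  · refine ⟨fun _ => 0, fun _ _ _ _ _ => le_rfl, fun _ _ => Set.self_mem_Ici, fun ξ _ P hP => ?_⟩
    constructor
    · rintro ⟨h, -⟩; exact absurd h (not_le.mpr (bMid_pos P))
    · rintro ⟨h, -⟩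
      exact absurd (show P ∈ {P | P ∈ T.carrier ∧ volume P.I < V} from ⟨hP, h⟩) (by simp [h0])
  · obtain ⟨P0, ⟨hP0, hV0⟩, hmin⟩ := Set.exists_min_image _ bK
      (hfin.subset (fun P hP => hP.1)) h0
    have t0 := hL P0 hP0
    rw [bLower] at t0
    refine ⟨fun ξ => if bMid P0 ≤ ξ then ξ else 0, ?_, ?_, ?_⟩
    · intro a ha b hb hab
      dsimp only
      split_ifs with h1 h2 h2
      · exact hab
      · linarith
      · exact hb
      · exact le_rfl
    · intro ξ hξ
      dsimp only
      split_ifs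
      · exact hξ
      · exact Set.self_mem_Ici
    · intro ξ hξ P hP
      have t := hL P hP
      rw [bLower] at t
      dsimp only
      split_ifs with h1
      · constructor
        · intro h
          refine ⟨?_, h⟩
          by_contra hV
          have := nest_ol (b_vol_lt hV0 hV) ⟨t.1, t.2.trans (bMid_lt P)⟩ t0
          linarith [h.2]
        · exact fun h => h.2
      · constructor
        · rintro ⟨h, -⟩; exact absurd h (not_le.mpr (bMid_pos P))
        · rintro ⟨hV, h⟩
          have := nest_ll (hmin P ⟨hP, hV⟩) t0 t
          exact absurd (this.2.trans h.1) h1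

lemma lt_of_nest {P Q : Bitile} {x a : ℝ} (hP : x ∈ P.I) (hQ : x ∈ Q.I) (hk : bK Q < bK P)
    (aP : bLo P ≤ a ∧ a < bMid P) (aQ : bLo Q ≤ a ∧ a < bMid Q) : lowerLT P Q := by
  have n := nest_ol hk ⟨aQ.1, aQ.2.trans (bMid_lt Q)⟩ aP
  have h1 := bLo_lt Q
  have h2 := bMid_lt Q
  refine ⟨⟨bI_sub hP hQ hk.le, ?_⟩, ?_⟩
  · rw [bLower, bLower]
    exact Set.Ico_subset_Ico n.1 (by linarith)
  · rintro ⟨-, h⟩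
    rw [bLower, bLower] at h
    have : bMid Q ∈ Set.Ico (bLo Q) (bMid Q) := h ⟨by linarith, by linarith⟩
    exact lt_irrefl _ this.2

lemma case_l (x : ℝ) (Ps : Set Bitile) (hx : ∀ P ∈ Ps, x ∈ P.I)
    (Ts : Set WTree) (hTs : Ts.Finite) (hne : Ts.Nonempty) (hPs : Ps = ⋃ T ∈ Ts, T.carrier)
    (h : ProperlySorted Ts) (V : ℝ≥0∞) :
    (∀ ξ ∈ Set.Ici (0 : ℝ), ∃ T ∈ Ts, actSet Ps V ξ ⊆ T.carrier) ∧
    ∀ (N : ℕ) (u : Fin (N + 1) → ℝ), StrictMono u → (∀ i, u i ∈ Set.Ici (0 : ℝ)) →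
      ∃ B : Finset (Fin N), B.card ≤ 2 * hTs.toFinset.card ∧ ∀ i, i ∉ B → ∃ T ∈ Ts,
        actSet Ps V (u i.succ) ⊆ T.carrier ∧ actSet Ps V (u i.castSucc) ⊆ T.carrier := by
  obtain ⟨hT, -, hno'⟩ := h
  have hsub : ∀ T ∈ Ts, T.carrier ⊆ Ps := fun T hT => hPs ▸ Set.subset_biUnion_of_mem hT
  have hcov : ∀ P ∈ Ps, ∃ T ∈ Ts, P ∈ T.carrier := by
    intro P hP
    rw [hPs] at hP
    simpa using hP
  have htop : ∀ T ∈ Ts, ∀ P ∈ T.carrier, bLo P ≤ T.ξtop ∧ T.ξtop < bMid P := by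
    intro T h' P hP
    have := (hT T h').2.1 P hP
    rwa [bLower] at this
  have hno : ∀ P ∈ Ps, ∀ T ∈ Ts, T.carrier.Nonempty →
      ¬ (bMid P ≤ T.ξtop ∧ T.ξtop < bHi P) := by
    rintro P hP T hTT ⟨Q, hQ⟩
    obtain ⟨T0, hT0, hP0⟩ := hcov P hP
    have := hno' T0 hT0 P hP0 T hTT
      ⟨x, ((hT T hTT).1.2.2 Q hQ).1 (hx Q (hsub T hTT hQ)), hx P hP⟩
    rwa [bUpper] at this
  have hdisj' : ∀ P ∈ Ps, ∀ Q ∈ Ps, ∀ z, (bMid P ≤ z ∧ z < bHi P) →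
      (bMid Q ≤ z ∧ z < bHi Q) → ¬ bK P < bK Q := by
    intro P hP Q hQ z hzP hzQ hk
    have n := nest_ou hk ⟨(bLo_lt P).le.trans hzP.1, hzP.2⟩ hzQ
    obtain ⟨T, hTT, hPT⟩ := hcov P hP
    have t := htop T hTT P hPT
    have := bMid_lt P
    exact hno Q hQ T hTT ⟨P, hPT⟩ ⟨by linarith, by linarith⟩
  have huniq : ∀ ξ, ∀ P ∈ actSet Ps V ξ, ∀ Q ∈ actSet Ps V ξ, P = Q := by
    intro ξ P hP Q hQ
    have aP := mem_act.mp hP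
    have aQ := mem_act.mp hQ
    have h1 := hdisj' P aP.1 Q aQ.1 ξ aP.2.2 aQ.2.2
    have h2 := hdisj' Q aQ.1 P aP.1 ξ aQ.2.2 aP.2.2
    refine b_ext (hx P aP.1) (hx Q aQ.1) (by omega) (z := ξ) ?_ ?_
    · rw [bOmega]; exact ⟨(bLo_lt P).le.trans aP.2.2.1, aP.2.2.2⟩
    · rw [bOmega]; exact ⟨(bLo_lt Q).le.trans aQ.2.2.1, aQ.2.2.2⟩
  have hsup : ∀ ξ, ∃ T ∈ Ts, actSet Ps V ξ ⊆ T.carrier := by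
    intro ξ
    rcases Set.eq_empty_or_nonempty (actSet Ps V ξ) with h0 | ⟨P, hP⟩
    · obtain ⟨T, hT⟩ := hne
      exact ⟨T, hT, by simp [h0]⟩
    · obtain ⟨T, hT, hPT⟩ := hcov P (mem_act.mp hP).1
      exact ⟨T, hT, fun Q hQ => huniq ξ P hP Q hQ ▸ hPT⟩
  refine ⟨fun ξ _ => hsup ξ, ?_⟩
  intro N u hu huD
  have hstep : ∀ i j : Fin N, i < j → u i.succ ≤ u j.castSucc := fun i j hij =>
    hu.monotone (by rw [Fin.le_def]; simpa using Fin.lt_def.mp hij)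
  have huv : ∀ i : Fin N, u i.castSucc < u i.succ := fun i => hu Fin.castSucc_lt_succ
  refine ⟨Finset.univ.filter fun i => ¬ ∃ T ∈ Ts,
    actSet Ps V (u i.succ) ⊆ T.carrier ∧ actSet Ps V (u i.castSucc) ⊆ T.carrier, ?_, ?_⟩
  swap
  · intro i hi
    by_contra hc
    exact hi (by simpa using hc)
  rw [← Finset.card_filter_add_card_filter_not (fun i : Fin N => ∃ T ∈ Ts, T.carrier.Nonempty ∧
    u i.castSucc < T.ξtop ∧ T.ξtop ≤ u i.succ), two_mul]
  refine add_le_add ?_ ?_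
  · refine count_bad _ _ (fun i T => u i.castSucc < T.ξtop ∧ T.ξtop ≤ u i.succ) ?_ ?_
    · intro i hi
      obtain ⟨T, hTT, -, h2⟩ := (Finset.mem_filter.mp hi).2
      exact ⟨T, hTs.mem_toFinset.mpr hTT, h2⟩
    · intro i _ j _ hij T _ h1 h2
      linarith [hstep i j hij, h1.2, h2.1]
  · refine count_bad _ _ (fun i T => ∃ P ∈ actSet Ps V (u i.castSucc), P ∈ T.carrier ∧
      ∃ Q ∈ actSet Ps V (u i.succ), Q ∉ T.carrier) ?_ ?_
    · intro i hi
      have hi' := (Finset.mem_filter.mp (Finset.mem_filter.mp hi).1).2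
      rcases Set.eq_empty_or_nonempty (actSet Ps V (u i.castSucc)) with h0 | ⟨P, hP⟩
      · exfalso
        obtain ⟨T, hT, hA⟩ := hsup (u i.succ)
        exact hi' ⟨T, hT, hA, by simp [h0]⟩
      obtain ⟨T, hTT, hPT⟩ := hcov P (mem_act.mp hP).1
      refine ⟨T, hTs.mem_toFinset.mpr hTT, P, hP, hPT, ?_⟩
      by_contra hc
      push Not at hc
      exact hi' ⟨T, hTT, hc, fun Q hQ => huniq _ P hP Q hQ ▸ hPT⟩
    · rintro i hi j - hij T hTT ⟨P, hP, hPT, Q, hQ, hQT⟩ ⟨P', hP', hPT', -⟩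
      replace hTT := hTs.mem_toFinset.mp hTT
      have hnt := (Finset.mem_filter.mp hi).2
      push Not at hnt
      have s1 := huv i
      have s2 := hstep i j hij
      have aP := mem_act.mp hP
      have aQ := mem_act.mp hQ
      have aP' := mem_act.mp hP'
      obtain ⟨T1, hT1, hQT1⟩ := hcov Q aQ.1
      have tP := htop T hTT P hPT
      have tP' := htop T hTT P' hPT'
      have tQ := htop T1 hT1 Q hQT1
      have hTu : T.ξtop ≤ u i.castSucc := by linarith [aP.2.2.1]
      have hT1u : T1.ξtop ≤ u i.castSucc := by
        by_contra hc
        have := hnt T1 hT1 ⟨Q, hQT1⟩ (by linarith)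
        linarith [aQ.2.2.1]
      obtain ⟨a, ha1, ha2, hau, hano⟩ : ∃ a, T.ξtop ≤ a ∧ T1.ξtop ≤ a ∧ a ≤ u i.castSucc ∧
          ∀ R ∈ Ps, ¬ (bMid R ≤ a ∧ a < bHi R) := by
        rcases le_total T.ξtop T1.ξtop with hc | hc
        · exact ⟨T1.ξtop, hc, le_rfl, hT1u, fun R hR => hno R hR T1 hT1 ⟨Q, hQT1⟩⟩
        · exact ⟨T.ξtop, le_rfl, hc, hTu, fun R hR => hno R hR T hTT ⟨P, hPT⟩⟩
      have lP : bLo P ≤ a ∧ a < bMid P := by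
        refine ⟨by linarith, ?_⟩
        by_contra hc
        exact hano P aP.1 ⟨by linarith, by linarith [aP.2.2.2]⟩
      have lP' : bLo P' ≤ a ∧ a < bMid P' := by
        refine ⟨by linarith, ?_⟩
        by_contra hc
        exact hano P' aP'.1 ⟨by linarith, by linarith [aP'.2.2.2]⟩
      have lQ : bLo Q ≤ a ∧ a < bMid Q := by
        refine ⟨by linarith, ?_⟩
        by_contra hc
        exact hano Q aQ.1 ⟨by linarith, by linarith [aQ.2.2.2]⟩
      have full : ∀ R : Bitile, (bLo R ≤ a ∧ a < bMid R) → bLo R ≤ a ∧ a < bHi R :=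
        fun R hR => ⟨hR.1, hR.2.trans (bMid_lt R)⟩
      have mem : ∀ R : Bitile, (bLo R ≤ a ∧ a < bMid R) → a ∈ R.ω :=
        fun R hR => by rw [bOmega]; exact full R hR
      have k1 : bK Q < bK P' := by
        rcases lt_trichotomy (bK Q) (bK P') with hc | hc | hc
        · exact hc
        · exact absurd (b_ext (hx Q aQ.1) (hx P' aP'.1) hc (mem Q lQ) (mem P' lP') ▸ hPT') hQT
        · have := nest_ol hc (full P' lP') lQ
          linarith [aP'.2.2.2, aQ.2.2.1]
      have k2 : bK P < bK Q := by
        rcases lt_trichotomy (bK P) (bK Q) with hc | hc | hc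
        · exact hc
        · exact absurd (b_ext (hx P aP.1) (hx Q aQ.1) hc (mem P lP) (mem Q lQ) ▸ hPT) hQT
        · have := nest_ol hc (full Q lQ) lP
          linarith [aQ.2.2.2, aP.2.2.1]
      exact hQT ((hT T hTT).2.2 P' Q P hPT' hPT
        (lt_of_nest (hx P' aP'.1) (hx Q aQ.1) k1 lP' lQ)
        (lt_of_nest (hx Q aQ.1) (hx P aP.1) k2 lQ lP))

/-- Corollary 6.3: for a stack of trees as in Lemma 6.1 and any coefficients `c_P`,
`sup_k ‖Σ_{P ∈ Ps, |I_P| < 2^k} c_P 1_{ω_{P_u}}‖_{V^r_ξ}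
  ≤ C |Ts|^{1/r} sup_{T ∈ Ts} ‖Σ_{P ∈ T} c_P 1_{ω_{P_u}}‖_{V^r}`. -/
theorem stack_trunc_variation : ∃ C : ℝ, 0 < C ∧ ∀ r : ℝ, 1 ≤ r →
    ∀ x : ℝ, 0 ≤ x → ∀ Ps : Set Bitile, Ps.Finite → (∀ P ∈ Ps, x ∈ P.I) →
    ∀ Ts : Set WTree, Ts.Finite → Ps = (⋃ T ∈ Ts, T.carrier) →
    ((∀ T ∈ Ts, IsTree T ∧ UOverlapping T ∧
        TdMaximalAmong T {T' | IsTree T' ∧ UOverlapping T' ∧ T'.carrier ⊆ Ps}) ∨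
      ProperlySorted Ts) →
    ∀ c : Bitile → ℝ,
      (⨆ k : ℤ, vnorm r (Set.Ici 0) fun ξ =>
          ∑ᶠ (P : Bitile) (_ : P ∈ Ps ∧ volume P.I < 2 ^ k),
            c P * Set.indicator (upperHalf P.ω) (fun _ => (1 : ℝ)) ξ) ≤
        ENNReal.ofReal C * (Ts.ncard : ℝ≥0∞) ^ (1 / r) *
          ⨆ T ∈ Ts, vnorm r (Set.Ici 0) (fun ξ =>
            ∑ᶠ P ∈ T.carrier, c P * Set.indicator (upperHalf P.ω) (fun _ => (1 : ℝ)) ξ) := by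
  refine ⟨7, by norm_num, ?_⟩
  intro r hr x _ Ps hfin hx Ts hTs hPs hcase c
  refine iSup_le fun k => ?_
  rcases Ts.eq_empty_or_nonempty with rfl | hne
  · have hE : Ps = ∅ := by simpa using hPs
    have hr0 : 0 < r := by linarith
    subst hE
    simp [vnorm, hr0]
  have hTfin : ∀ T ∈ Ts, T.carrier.Finite := fun T hT =>
    hfin.subset (hPs ▸ Set.subset_biUnion_of_mem hT)
  rcases hcase with h | h
  · have hφ := fun T (hT : T ∈ Ts) => phi_u T (hTfin T hT) (h T hT).2.1 (2 ^ k)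
    choose! φ h1 h2 h3 using hφ
    obtain ⟨h4, h5⟩ := case_u x Ps hfin hx Ts hTs hne hPs h (2 ^ k)
    exact core_bound r hr Ps Ts hTs hPs c (2 ^ k) φ h1 h2 h3 h4 h5
  · have hφ := fun T (hT : T ∈ Ts) => phi_l T (hTfin T hT) (h.1 T hT).2.1 (2 ^ k)
    choose! φ h1 h2 h3 using hφ
    obtain ⟨h4, h5⟩ := case_l x Ps hx Ts hTs hne hPs h (2 ^ k)
    exact core_bound r hr Ps Ts hTs hPs c (2 ^ k) φ h1 h2 h3 h4 h5

end
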